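/- Factorisation composes strong reductions: suppose H factorises into H₀ and H₁, and both H₀ and H₁ strongly reduce to H'. Then H strongly reduces to H'; moreover, if r₀ is a strong reduction from H₀ to H' and r₁ is a strong reduction from H₁ to H', then r₁ ∘ r₀ is a strong reduction from H to H'. -/

import Mathlib

namespace CKAH

open Classical

/-! ### Labelled posets and pomsets -/

/-- A labelled poset over alphabet `A`: a finite carrier with a partial order and labelling. -/
structure LPoset (A : Type) : Type 1 where
  carrier : Type
  [fin : Fintype carrier]
  [ord : PartialOrder carrier]
  lab : carrier → A

attribute [instance] LPoset.fin LPoset.ord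

/-- Isomorphism of labelled posets: an order isomorphism preserving labels. -/
def LPoset.Iso {A : Type} (u v : LPoset A) : Prop :=
  ∃ e : u.carrier ≃o v.carrier, ∀ x, v.lab (e x) = u.lab x

theorem LPoset.iso_equivalence (A : Type) : Equivalence (LPoset.Iso (A := A)) where
  refl u := ⟨OrderIso.refl _, fun _ => rfl⟩
  symm := by
    rintro u v ⟨e, he⟩
    exact ⟨e.symm, fun x => by rw [← he (e.symm x), OrderIso.apply_symm_apply]⟩
  trans := by
    rintro u v w ⟨e, he⟩ ⟨f, hf⟩
    exact ⟨e.trans f, fun x => by rw [OrderIso.trans_apply, hf, he]⟩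

instance pomSetoid (A : Type) : Setoid (LPoset A) := ⟨LPoset.Iso, LPoset.iso_equivalence A⟩

/-- A pomset is an isomorphism class of labelled posets. -/
def Pomset (A : Type) : Type 1 := Quotient (pomSetoid A)

/-- Sequential composition of labelled posets: disjoint union, everything on the left
below everything on the right (lexicographic sum order). -/
def LPoset.seqL {A : Type} (u v : LPoset A) : LPoset A where
  carrier := u.carrier ⊕ₗ v.carrier
  fin := inferInstanceAs (Fintype (u.carrier ⊕ v.carrier))
  lab := fun x => Sum.elim u.lab v.lab (ofLex x)

/-- Parallel composition of labelled posets: disjoint union with no cross ordering. -/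
def LPoset.parL {A : Type} (u v : LPoset A) : LPoset A where
  carrier := u.carrier ⊕ v.carrier
  lab := Sum.elim u.lab v.lab

def Pomset.seq {A : Type} : Pomset A → Pomset A → Pomset A :=
  Quotient.map₂ LPoset.seqL (by
    rintro u₁ u₂ ⟨e, he⟩ v₁ v₂ ⟨f, hf⟩
    refine ⟨(RelIso.sumLexCongr e f :
      (u₁.carrier ⊕ₗ v₁.carrier) ≃o (u₂.carrier ⊕ₗ v₂.carrier)), ?_⟩
    rintro (x | x)
    · exact he x
    · exact hf x)

/-- Order isomorphism between disjoint-union orders, from component isomorphisms. -/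
def sumOrderIso {α β γ δ : Type} [PartialOrder α] [PartialOrder β] [PartialOrder γ]
    [PartialOrder δ] (e : α ≃o γ) (f : β ≃o δ) : (α ⊕ β) ≃o (γ ⊕ δ) where
  toEquiv := Equiv.sumCongr e.toEquiv f.toEquiv
  map_rel_iff' := by
    rintro (x | x) (y | y) <;> simp [Sum.le_def, e.le_iff_le, f.le_iff_le]

def Pomset.par {A : Type} : Pomset A → Pomset A → Pomset A :=
  Quotient.map₂ LPoset.parL (by
    rintro u₁ u₂ ⟨e, he⟩ v₁ v₂ ⟨f, hf⟩
    refine ⟨sumOrderIso e f, ?_⟩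
    rintro (x | x)
    · exact he x
    · exact hf x)

def LPoset.emptyL (A : Type) : LPoset A := { carrier := Fin 0, lab := fun x => x.elim0 }

def LPoset.singleL {A : Type} (a : A) : LPoset A := { carrier := PUnit, lab := fun _ => a }

/-- The empty pomset `1`. -/
def Pomset.empty (A : Type) : Pomset A := ⟦LPoset.emptyL A⟧

/-- The single-letter pomset. -/
def Pomset.single {A : Type} (a : A) : Pomset A := ⟦LPoset.singleL a⟧

/-- Subsumption on labelled posets: `u ⊑ v` iff there is a label-preserving
order-preserving bijection from the carrier of `v` to that of `u`. -/
def LPoset.subL {A : Type} (u v : LPoset A) : Prop :=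
  ∃ h : v.carrier ≃ u.carrier,
    (∀ x, u.lab (h x) = v.lab x) ∧ ∀ x y : v.carrier, x ≤ y → h x ≤ h y

/-- Subsumption of pomsets: `Pomset.sub U V` means `U ⊑ V`. -/
def Pomset.sub {A : Type} : Pomset A → Pomset A → Prop :=
  Quotient.lift₂ LPoset.subL (by
    rintro u₁ v₁ u₂ v₂ ⟨e, he⟩ ⟨f, hf⟩
    refine propext ⟨?_, ?_⟩
    · rintro ⟨h, hl, hm⟩
      refine ⟨(f.toEquiv.symm.trans h).trans e.toEquiv, fun x => ?_, fun x y hxy => ?_⟩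
      · show u₂.lab (e (h (f.symm x))) = v₂.lab x
        rw [he, hl, ← hf (f.symm x), OrderIso.apply_symm_apply]
      · simp only [Equiv.trans_apply]
        exact e.le_iff_le.mpr (hm _ _ (f.symm.le_iff_le.mpr hxy))
    · rintro ⟨h, hl, hm⟩
      refine ⟨(f.toEquiv.trans h).trans e.toEquiv.symm, fun x => ?_, fun x y hxy => ?_⟩
      · show u₁.lab (e.symm (h (f x))) = v₁.lab x
        rw [← he (e.symm (h (f x))), OrderIso.apply_symm_apply, hl, hf]
      · simp only [Equiv.trans_apply]
        exact e.symm.le_iff_le.mpr (hm _ _ (f.le_iff_le.mpr hxy)))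

def LPoset.isWordL {A : Type} (u : LPoset A) : Prop := ∀ x y : u.carrier, x ≤ y ∨ y ≤ x

/-- A pomset is a word when it is totally ordered. -/
def Pomset.IsWord {A : Type} : Pomset A → Prop :=
  Quotient.lift LPoset.isWordL (by
    rintro u v ⟨e, -⟩
    refine propext ⟨fun h x y => ?_, fun h x y => ?_⟩
    · rcases h (e.symm x) (e.symm y) with h' | h'
      · exact Or.inl (e.symm.le_iff_le.mp h')
      · exact Or.inr (e.symm.le_iff_le.mp h')
    · rcases h (e x) (e y) with h' | h'
      · exact Or.inl (e.le_iff_le.mp h')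
      · exact Or.inr (e.le_iff_le.mp h'))

def LPoset.mapL {A B : Type} (f : A → B) (u : LPoset A) : LPoset B :=
  { carrier := u.carrier, lab := f ∘ u.lab }

/-- Relabelling of pomsets along a function on letters. -/
def Pomset.map {A B : Type} (f : A → B) : Pomset A → Pomset B :=
  Quotient.map (LPoset.mapL f)
    (by rintro u v ⟨e, he⟩; exact ⟨e, fun x => congrArg f (he x)⟩)

def LPoset.overL {A : Type} (Γ : Set A) (u : LPoset A) : Prop := ∀ x, u.lab x ∈ Γ

/-- All labels of the pomset belong to `Γ`. -/
def Pomset.Over {A : Type} (Γ : Set A) : Pomset A → Prop :=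
  Quotient.lift (LPoset.overL Γ) (by
    rintro u v ⟨e, he⟩
    refine propext ⟨fun h x => ?_, fun h x => ?_⟩
    · have h2 := he (e.symm x)
      rw [OrderIso.apply_symm_apply] at h2
      rw [h2]; exact h _
    · rw [← he x]; exact h _)

/-- Series-parallel pomsets. -/
inductive Pomset.IsSP {A : Type} : Pomset A → Prop
  | empty : Pomset.IsSP (Pomset.empty A)
  | single (a : A) : Pomset.IsSP (Pomset.single a)
  | seq {U V : Pomset A} : Pomset.IsSP U → Pomset.IsSP V → Pomset.IsSP (Pomset.seq U V)
  | par {U V : Pomset A} : Pomset.IsSP U → Pomset.IsSP V → Pomset.IsSP (Pomset.par U V)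

def SPset (A : Type) : Set (Pomset A) := {U | U.IsSP}

/-! ### Pomset contexts -/

/-- Contexts are pomsets over `Option A`, where `none` plays the role of `*`.
`uniqueStarL` says there is exactly one `*`-labelled node. -/
def LPoset.uniqueStarL {A : Type} (c : LPoset (Option A)) : Prop := ∃! x, c.lab x = none

theorem LPoset.uniqueStarL_congr {A : Type} {u v : LPoset (Option A)}
    (e : u.carrier ≃o v.carrier) (he : ∀ x, v.lab (e x) = u.lab x) :
    u.uniqueStarL ↔ v.uniqueStarL := by
  constructor
  · rintro ⟨x, hx, hux⟩
    refine ⟨e x, show v.lab (e x) = none by rw [he]; exact hx, fun y hy => ?_⟩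
    have h2 := he (e.symm y)
    rw [OrderIso.apply_symm_apply] at h2
    have h3 : e.symm y = x := hux _ (h2.symm.trans hy)
    rw [← h3, OrderIso.apply_symm_apply]
  · rintro ⟨x, hx, hvx⟩
    refine ⟨e.symm x, ?_, fun y hy => ?_⟩
    · show u.lab (e.symm x) = none
      have h2 := he (e.symm x)
      rw [OrderIso.apply_symm_apply] at h2
      rw [← h2]; exact hx
    · have h3 : e y = x := hvx _ (show v.lab (e y) = none by rw [he]; exact hy)
      rw [← h3, OrderIso.symm_apply_apply]

/-- A pomset context: exactly one node labelled `*`. -/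
def Pomset.IsCtx {A : Type} : Pomset (Option A) → Prop :=
  Quotient.lift LPoset.uniqueStarL
    (fun _ _ h => propext (LPoset.uniqueStarL_congr h.choose h.choose_spec))

/-- Series-parallel pomset contexts. -/
def Pomset.IsSPCtx {A : Type} (C : Pomset (Option A)) : Prop := C.IsCtx ∧ C.IsSP

/-- Sequential (totally ordered) pomset contexts. -/
def Pomset.IsSeqCtx {A : Type} (C : Pomset (Option A)) : Prop := C.IsCtx ∧ C.IsWord

/-- The trivial context `*`. -/
def starCtx (A : Type) : Pomset (Option A) := Pomset.single (none : Option A)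

theorem option_get_eq_get {α : Type} {o₁ o₂ : Option α} (h : o₁ = o₂) (h₁ : o₁.isSome)
    (h₂ : o₂.isSome) : o₁.get h₁ = o₂.get h₂ := by subst h; rfl

/-- The order of `C[U]`: the orders of `C` (restricted away from `*`) and of `U`, with a
point of `C` below (resp. above) all of `U` when it is below (resp. above) the unique
`*`-node of `C`.  (For well-definedness of the order, the cross-relations are guarded by
the requirement that the star node is unique, which holds for every genuine context.) -/
def LPoset.insLe {A : Type} (c : LPoset (Option A)) (u : LPoset A) :
    ({x : c.carrier // c.lab x ≠ none} ⊕ u.carrier) →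
    ({x : c.carrier // c.lab x ≠ none} ⊕ u.carrier) → Prop
  | Sum.inl x, Sum.inl y => x.val ≤ y.val
  | Sum.inr x, Sum.inr y => x ≤ y
  | Sum.inl x, Sum.inr _ => c.uniqueStarL ∧ ∃ s, c.lab s = none ∧ x.val ≤ s
  | Sum.inr _, Sum.inl y => c.uniqueStarL ∧ ∃ s, c.lab s = none ∧ s ≤ y.val

/-- Insertion of a labelled poset `u` into the gap of a context `c`: the `*`-labelled
node is removed and `u` is put in its place, inheriting the order relations of `*`. -/
noncomputable def LPoset.insL {A : Type} (c : LPoset (Option A)) (u : LPoset A) :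
    LPoset A where
  carrier := {x : c.carrier // c.lab x ≠ none} ⊕ u.carrier
  fin := by classical exact inferInstance
  ord :=
    { le := LPoset.insLe c u
      lt := fun p q => LPoset.insLe c u p q ∧ ¬ LPoset.insLe c u q p
      lt_iff_le_not_ge := fun _ _ => Iff.rfl
      le_refl := by rintro (x | x) <;> exact le_refl _
      le_trans := by
        rintro (x | x) (y | y) (z | z) h1 h2
        · exact le_trans h1 h2
        · obtain ⟨hu, s, hs, hys⟩ := h2
          exact ⟨hu, s, hs, le_trans h1 hys⟩
        · obtain ⟨hu, s, hs, hxs⟩ := h1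
          obtain ⟨-, t, ht, htz⟩ := h2
          obtain ⟨w, hw, huniq⟩ := hu
          have hst : s = t := (huniq s hs).trans (huniq t ht).symm
          exact le_trans (hst ▸ hxs) htz
        · exact h1
        · obtain ⟨hu, s, hs, hsy⟩ := h1
          exact ⟨hu, s, hs, le_trans hsy h2⟩
        · obtain ⟨hu, s, hs, hsy⟩ := h1
          obtain ⟨-, t, ht, hyt⟩ := h2
          obtain ⟨w, hw, huniq⟩ := hu
          have hst : s = t := (huniq s hs).trans (huniq t ht).symm
          have hy : y.val = s := le_antisymm (hst.symm ▸ hyt) hsy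
          exact absurd (hy.symm ▸ hs) y.prop
        · exact h2
        · exact le_trans h1 h2
      le_antisymm := by
        rintro (x | x) (y | y) h1 h2
        · exact congrArg Sum.inl (Subtype.ext (le_antisymm h1 h2))
        · obtain ⟨hu, s, hs, hxs⟩ := h1
          obtain ⟨-, t, ht, htx⟩ := h2
          obtain ⟨w, hw, huniq⟩ := hu
          have hst : s = t := (huniq s hs).trans (huniq t ht).symm
          have hx : x.val = s := le_antisymm hxs (hst.symm ▸ htx)
          exact absurd (hx.symm ▸ hs) x.prop
        · obtain ⟨hu, s, hs, hsy⟩ := h1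
          obtain ⟨-, t, ht, hyt⟩ := h2
          obtain ⟨w, hw, huniq⟩ := hu
          have hst : s = t := (huniq s hs).trans (huniq t ht).symm
          have hy : y.val = s := le_antisymm (hst.symm ▸ hyt) hsy
          exact absurd (hy.symm ▸ hs) y.prop
        · exact congrArg Sum.inr (le_antisymm h1 h2) }
  lab := Sum.elim (fun x => (c.lab x.val).get (Option.isSome_iff_ne_none.mpr x.prop)) u.lab

/-- `Pomset.ins C U` is `C[U]`: plugging the pomset `U` into the gap of the context `C`. -/
noncomputable def Pomset.ins {A : Type} : Pomset (Option A) → Pomset A → Pomset A :=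
  Quotient.map₂ LPoset.insL (by
    rintro c₁ c₂ ⟨e, he⟩ u₁ u₂ ⟨f, hf⟩
    have hstar : c₁.uniqueStarL ↔ c₂.uniqueStarL := LPoset.uniqueStarL_congr e he
    refine ⟨{ toEquiv := Equiv.sumCongr
                (e.toEquiv.subtypeEquiv fun x => by
                  rw [show c₂.lab (e.toEquiv x) = c₁.lab x from he x]) f.toEquiv
              map_rel_iff' := ?_ }, ?_⟩
    · rintro (x | x) (y | y)
      · exact e.le_iff_le
      · show (c₂.uniqueStarL ∧ ∃ s, c₂.lab s = none ∧ (e x.val : c₂.carrier) ≤ s) ↔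
             (c₁.uniqueStarL ∧ ∃ s, c₁.lab s = none ∧ x.val ≤ s)
        constructor
        · rintro ⟨hu, s, hs, hxs⟩
          refine ⟨hstar.mpr hu, e.symm s, ?_, ?_⟩
          · have h2 := he (e.symm s)
            rw [OrderIso.apply_symm_apply] at h2
            rw [← h2]; exact hs
          · exact e.le_iff_le.mp (by rw [OrderIso.apply_symm_apply]; exact hxs)
        · rintro ⟨hu, s, hs, hxs⟩
          exact ⟨hstar.mp hu, e s, by rw [he]; exact hs, e.le_iff_le.mpr hxs⟩
      · show (c₂.uniqueStarL ∧ ∃ s, c₂.lab s = none ∧ s ≤ (e y.val : c₂.carrier)) ↔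
             (c₁.uniqueStarL ∧ ∃ s, c₁.lab s = none ∧ s ≤ y.val)
        constructor
        · rintro ⟨hu, s, hs, hsy⟩
          refine ⟨hstar.mpr hu, e.symm s, ?_, ?_⟩
          · have h2 := he (e.symm s)
            rw [OrderIso.apply_symm_apply] at h2
            rw [← h2]; exact hs
          · exact e.le_iff_le.mp (by rw [OrderIso.apply_symm_apply]; exact hsy)
        · rintro ⟨hu, s, hs, hsy⟩
          exact ⟨hstar.mp hu, e s, by rw [he]; exact hs, e.le_iff_le.mpr hsy⟩
      · exact f.le_iff_le
    · rintro (x | x)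
      · exact option_get_eq_get (he x.val) _ _
      · exact hf x)

/-! ### Pomset languages -/

abbrev Lang (A : Type) := Set (Pomset A)

def Lang.seq {A : Type} (L K : Lang A) : Lang A :=
  {W | ∃ U ∈ L, ∃ V ∈ K, W = Pomset.seq U V}

def Lang.par {A : Type} (L K : Lang A) : Lang A :=
  {W | ∃ U ∈ L, ∃ V ∈ K, W = Pomset.par U V}

def Lang.pow {A : Type} (L : Lang A) : ℕ → Lang A
  | 0 => {Pomset.empty A}
  | n + 1 => Lang.seq (Lang.pow L n) L

def Lang.star {A : Type} (L : Lang A) : Lang A := ⋃ n, L.pow n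

/-- Application of a context to a language: `C[L] = {C[U] : U ∈ L}`. -/
def Ctx.img {A : Type} (C : Pomset (Option A)) (L : Lang A) : Lang A :=
  {W | ∃ U ∈ L, W = C.ins U}

/-! ### CKA terms and semantics -/

inductive Term (A : Type) : Type
  | zero : Term A
  | one : Term A
  | var : A → Term A
  | add : Term A → Term A → Term A
  | seq : Term A → Term A → Term A
  | par : Term A → Term A → Term A
  | star : Term A → Term A

/-- Pomset language semantics of CKA terms. -/
def Term.lang {A : Type} : Term A → Lang A
  | .zero => ∅
  | .one => {Pomset.empty A}
  | .var a => {Pomset.single a}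
  | .add e f => e.lang ∪ f.lang
  | .seq e f => Lang.seq e.lang f.lang
  | .par e f => Lang.par e.lang f.lang
  | .star e => Lang.star e.lang

/-- Sets of hypotheses: a hypothesis `e ≤ f` is the pair `(e, f)`. -/
abbrev HypSet (A : Type) := Set (Term A × Term A)

/-- The congruence `≡^H` on CKA terms generated by the CKA axioms and the hypotheses `H`
(the constructor `hyp` encodes `e ≦^H f`, i.e. `e + f ≡^H f`, for `e ≤ f ∈ H`). -/
inductive CongH {A : Type} (H : HypSet A) : Term A → Term A → Prop
  | refl (e) : CongH H e e
  | symm {e f} : CongH H e f → CongH H f e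
  | trans {e f g} : CongH H e f → CongH H f g → CongH H e g
  | addCong {e e' f f'} : CongH H e e' → CongH H f f' → CongH H (.add e f) (.add e' f')
  | seqCong {e e' f f'} : CongH H e e' → CongH H f f' → CongH H (.seq e f) (.seq e' f')
  | parCong {e e' f f'} : CongH H e e' → CongH H f f' → CongH H (.par e f) (.par e' f')
  | starCong {e e'} : CongH H e e' → CongH H (.star e) (.star e')
  | addZero (e) : CongH H (.add e .zero) e
  | addIdem (e) : CongH H (.add e e) e
  | addComm (e f) : CongH H (.add e f) (.add f e)
  | addAssoc (e f g) : CongH H (.add e (.add f g)) (.add (.add e f) g)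
  | seqAssoc (e f g) : CongH H (.seq e (.seq f g)) (.seq (.seq e f) g)
  | seqDistL (e f g) : CongH H (.seq e (.add f g)) (.add (.seq e f) (.seq e g))
  | seqDistR (e f g) : CongH H (.seq (.add e f) g) (.add (.seq e g) (.seq f g))
  | seqOneR (e) : CongH H (.seq e .one) e
  | seqOneL (e) : CongH H (.seq .one e) e
  | seqZeroR (e) : CongH H (.seq e .zero) .zero
  | seqZeroL (e) : CongH H (.seq .zero e) .zero
  | parComm (e f) : CongH H (.par e f) (.par f e)
  | parOne (e) : CongH H (.par e .one) e
  | parZero (e) : CongH H (.par e .zero) .zero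
  | parAssoc (e f g) : CongH H (.par e (.par f g)) (.par (.par e f) g)
  | parDist (e f g) : CongH H (.par e (.add f g)) (.add (.par e f) (.par e g))
  | starUnfoldL (e) : CongH H (.add .one (.seq e (.star e))) (.star e)
  | starUnfoldR (e) : CongH H (.add .one (.seq (.star e) e)) (.star e)
  | lfpL {e f g} : CongH H (.add (.add e (.seq f g)) g) g →
      CongH H (.add (.seq (.star f) e) g) g
  | lfpR {e f g} : CongH H (.add (.add e (.seq f g)) f) f →
      CongH H (.add (.seq e (.star g)) f) f
  | hyp {e f} : (e, f) ∈ H → CongH H (.add e f) f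

/-- `e ≦^H f`, the natural order `e + f ≡^H f`. -/
def LeH {A : Type} (H : HypSet A) (e f : Term A) : Prop := CongH H (.add e f) f

/-- The `H`-closure of a pomset language, as an inductive predicate: the smallest language
containing `L` such that for all `e ≤ f ∈ H` and series-parallel contexts `C`,
if `C[⟦f⟧] ⊆ cl` then `C[⟦e⟧] ⊆ cl`. -/
inductive closure {A : Type} (H : HypSet A) (L : Lang A) : Pomset A → Prop
  | base {U} : U ∈ L → closure H L U
  | step {e f : Term A} (hef : (e, f) ∈ H) {C : Pomset (Option A)} (hC : C.IsSPCtx)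
      (hf : ∀ V ∈ f.lang, closure H L (C.ins V)) {U} (hU : U ∈ e.lang) :
      closure H L (C.ins U)

/-- `cl H L` is the `H`-closure of `L`. -/
def cl {A : Type} (H : HypSet A) (L : Lang A) : Lang A := {U | closure H L U}

/-- The sequential closure: like `cl` but only sequential contexts are used. -/
inductive seqClosure {A : Type} (H : HypSet A) (L : Lang A) : Pomset A → Prop
  | base {U} : U ∈ L → seqClosure H L U
  | step {e f : Term A} (hef : (e, f) ∈ H) {C : Pomset (Option A)} (hC : C.IsSeqCtx)
      (hf : ∀ V ∈ f.lang, seqClosure H L (C.ins V)) {U} (hU : U ∈ e.lang) :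
      seqClosure H L (C.ins U)

def seqCl {A : Type} (H : HypSet A) (L : Lang A) : Lang A := {U | seqClosure H L U}

/-! ### Implication, completeness, reductions -/

/-- `H` implies `H'`: every hypothesis of `H'` is derivable from `H`. -/
def Implies {A : Type} (H H' : HypSet A) : Prop := ∀ p ∈ H', LeH H p.1 p.2

/-- `H` is complete: semantic equivalence implies axiomatic equivalence. -/
def Complete {A : Type} (H : HypSet A) : Prop :=
  ∀ e f : Term A, cl H e.lang = cl H f.lang → CongH H e f

/-- A reduction from `H` to `H'` (presupposing that `H` implies `H'`). -/
structure IsReduction {A : Type} (H H' : HypSet A) (r : Term A → Term A) : Prop where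
  implies : Implies H H'
  equiv : ∀ e, CongH H e (r e)
  reflect : ∀ e f : Term A, cl H e.lang = cl H f.lang → cl H' (r e).lang = cl H' (r f).lang

def Reduces {A : Type} (H H' : HypSet A) : Prop := ∃ r, IsReduction H H' r

/-- A strong reduction from `H` to `H'`. -/
structure IsStrongReduction {A : Type} (H H' : HypSet A) (r : Term A → Term A)
    extends IsReduction H H' r : Prop where
  strong : ∀ e : Term A, cl H e.lang = cl H' (r e).lang

def StronglyReduces {A : Type} (H H' : HypSet A) : Prop := ∃ r, IsStrongReduction H H' r

/-- `H` factorises into `H₀` and `H₁`. -/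
def Factorises {A : Type} (H H₀ H₁ : HypSet A) : Prop :=
  Implies H H₀ ∧ Implies H H₁ ∧ ∀ L : Lang A, L ⊆ SPset A → cl H L = cl H₁ (cl H₀ L)

/-! ### The exchange hypotheses and sp-subsumption -/

/-- The exchange hypotheses `(e∥f)·(g∥h) ≤ (e·g)∥(f·h)`. -/
def exch (A : Type) : HypSet A :=
  {p | ∃ e f g h : Term A,
    p = (Term.seq (.par e f) (.par g h), Term.par (.seq e g) (.seq f h))}

/-- `⊑^sp`: the smallest precongruence on series-parallel pomsets satisfying the
exchange inequality. -/
inductive spSub {A : Type} : Pomset A → Pomset A → Prop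
  | refl {U : Pomset A} : U.IsSP → spSub U U
  | trans {U V W} : spSub U V → spSub V W → spSub U W
  | seqCong {U V U' V'} : spSub U V → spSub U' V' → spSub (Pomset.seq U U') (Pomset.seq V V')
  | parCong {U V U' V'} : spSub U V → spSub U' V' → spSub (Pomset.par U U') (Pomset.par V V')
  | exch {U V W X : Pomset A} : U.IsSP → V.IsSP → W.IsSP → X.IsSP →
      spSub (Pomset.seq (Pomset.par U V) (Pomset.par W X))
            (Pomset.par (Pomset.seq U W) (Pomset.seq V X))

/-! ### KA terms, grounded hypotheses, sequential reductions -/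

/-- A term is a KA term when it contains no `∥`. -/
def Term.noPar {A : Type} : Term A → Prop
  | .zero => True
  | .one => True
  | .var _ => True
  | .add e f => e.noPar ∧ f.noPar
  | .seq e f => e.noPar ∧ f.noPar
  | .par _ _ => False
  | .star e => e.noPar

/-- A non-empty word. -/
def IsNonemptyWord {A : Type} (W : Pomset A) : Prop := W.IsWord ∧ W ≠ Pomset.empty A

/-- A set of hypotheses is grounded when in each hypothesis `e ≤ f`, `e` is a KA term and
`⟦f⟧ = {W}` for a non-empty word `W`. -/
def Grounded {A : Type} (H : HypSet A) : Prop :=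
  ∀ p ∈ H, p.1.noPar ∧ ∃ W : Pomset A, IsNonemptyWord W ∧ p.2.lang = {W}

/-- `≡_KA^H`: the congruence on terms generated by the axioms of `≡` not involving `∥`
together with the hypotheses of `H`. -/
inductive KACong {A : Type} (H : HypSet A) : Term A → Term A → Prop
  | refl (e) : KACong H e e
  | symm {e f} : KACong H e f → KACong H f e
  | trans {e f g} : KACong H e f → KACong H f g → KACong H e g
  | addCong {e e' f f'} : KACong H e e' → KACong H f f' → KACong H (.add e f) (.add e' f')
  | seqCong {e e' f f'} : KACong H e e' → KACong H f f' → KACong H (.seq e f) (.seq e' f')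
  | starCong {e e'} : KACong H e e' → KACong H (.star e) (.star e')
  | addZero (e) : KACong H (.add e .zero) e
  | addIdem (e) : KACong H (.add e e) e
  | addComm (e f) : KACong H (.add e f) (.add f e)
  | addAssoc (e f g) : KACong H (.add e (.add f g)) (.add (.add e f) g)
  | seqAssoc (e f g) : KACong H (.seq e (.seq f g)) (.seq (.seq e f) g)
  | seqDistL (e f g) : KACong H (.seq e (.add f g)) (.add (.seq e f) (.seq e g))
  | seqDistR (e f g) : KACong H (.seq (.add e f) g) (.add (.seq e g) (.seq f g))
  | seqOneR (e) : KACong H (.seq e .one) e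
  | seqOneL (e) : KACong H (.seq .one e) e
  | seqZeroR (e) : KACong H (.seq e .zero) .zero
  | seqZeroL (e) : KACong H (.seq .zero e) .zero
  | starUnfoldL (e) : KACong H (.add .one (.seq e (.star e))) (.star e)
  | starUnfoldR (e) : KACong H (.add .one (.seq (.star e) e)) (.star e)
  | lfpL {e f g} : KACong H (.add (.add e (.seq f g)) g) g →
      KACong H (.add (.seq (.star f) e) g) g
  | lfpR {e f g} : KACong H (.add (.add e (.seq f g)) f) f →
      KACong H (.add (.seq e (.star g)) f) f
  | hyp {e f} : (e, f) ∈ H → KACong H (.add e f) f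

/-- A sequential reduction from `H` to `H'`. -/
structure IsSeqReduction {A : Type} (H H' : HypSet A) (r : Term A → Term A) : Prop where
  implies : Implies H H'
  equiv : ∀ e : Term A, e.noPar → KACong H e (r e)
  closure_eq : ∀ e : Term A, e.noPar → seqCl H e.lang = seqCl H' (r e).lang

/-- Extension of a map on (KA) terms to all CKA terms, homomorphically on `∥`. -/
def parExt {A : Type} (r : Term A → Term A) : Term A → Term A
  | .par e f => .par (parExt r e) (parExt r f)
  | e => r e

/-! ### Inductive characterisation of sp contexts -/

/-- The generators of series-parallel contexts (Lemma: `PC^sp` is the smallest such set). -/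
inductive GenCtx {A : Type} : Pomset (Option A) → Prop
  | star : GenCtx (Pomset.single (none : Option A))
  | seqL {U : Pomset A} {C} : U.IsSP → GenCtx C → GenCtx (Pomset.seq (Pomset.map some U) C)
  | seqR {C} {V : Pomset A} : GenCtx C → V.IsSP → GenCtx (Pomset.seq C (Pomset.map some V))
  | par {U : Pomset A} {C} : U.IsSP → GenCtx C → GenCtx (Pomset.par (Pomset.map some U) C)

/-! ### Reification -/

/-- Homomorphic extension of a letter map to terms. -/
def rTerm {A : Type} (r : A → Term A) : Term A → Term A
  | .zero => .zero
  | .one => .one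
  | .var a => r a
  | .add e f => .add (rTerm r e) (rTerm r f)
  | .seq e f => .seq (rTerm r e) (rTerm r f)
  | .par e f => .par (rTerm r e) (rTerm r f)
  | .star e => .star (rTerm r e)

/-- All letters of a term lie in `Γ`. -/
def TermOver {A : Type} (Γ : Set A) : Term A → Prop
  | .zero => True
  | .one => True
  | .var a => a ∈ Γ
  | .add e f => TermOver Γ e ∧ TermOver Γ f
  | .seq e f => TermOver Γ e ∧ TermOver Γ f
  | .par e f => TermOver Γ e ∧ TermOver Γ f
  | .star e => TermOver Γ e

/-- Extension of a letter map `r` to (series-parallel) pomsets, as a relation: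
`rMap r U V` means `V ∈ r(U)`. -/
inductive rMap {A : Type} (r : A → Term A) : Pomset A → Pomset A → Prop
  | one : rMap r (Pomset.empty A) (Pomset.empty A)
  | var (a : A) {V} : V ∈ (r a).lang → rMap r (Pomset.single a) V
  | seq {U U' V V'} : rMap r U V → rMap r U' V' →
      rMap r (Pomset.seq U U') (Pomset.seq V V')
  | par {U U' V V'} : rMap r U V → rMap r U' V' →
      rMap r (Pomset.par U U') (Pomset.par V V')

/-- Image of a language under (the pomset extension of) `r`. -/
def rImg {A : Type} (r : A → Term A) (L : Lang A) : Lang A := {V | ∃ U ∈ L, rMap r U V}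

/-- Series-parallel pomsets over the subalphabet `Γ`. -/
def SPover {A : Type} (Γ : Set A) : Lang A := {U | U.IsSP ∧ U.Over Γ}

/-- `r : Σ → Term Γ` is a reification from `H` to `H'`. -/
structure IsReification {A : Type} (Γ : Set A) (H H' : HypSet A) (r : A → Term A) : Prop where
  toGamma : ∀ a : A, TermOver Γ (r a)
  equiv : ∀ a : A, CongH H (r a) (.var a)
  expansive : ∀ a ∈ Γ, LeH (∅ : HypSet A) (.var a) (r a)
  preserves : ∀ L : Lang A, L ⊆ SPover Γ → cl H' L ⊆ SPover Γ
  hyps : ∀ p ∈ H, LeH H' (rTerm r p.1) (rTerm r p.2)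

end CKAH

namespace CKAH


/-! ### Isomorphisms -/

theorem mkIso {A : Type} {u v : LPoset A} (f : u.carrier → v.carrier)
    (hs : ∀ y, ∃ x, f x = y) (hle : ∀ x y, f x ≤ f y ↔ x ≤ y)
    (hl : ∀ x, v.lab (f x) = u.lab x) : u.Iso v := by
  have hi : Function.Injective f := fun x y h =>
    le_antisymm ((hle x y).1 h.le) ((hle y x).1 h.ge)
  exact ⟨{ toEquiv := Equiv.ofBijective f ⟨hi, hs⟩
           map_rel_iff' := fun {a b} => hle a b }, hl⟩

section le
variable {A : Type} (u v : LPoset A)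

theorem seq_ll (x y : u.carrier) :
    @LE.le (LPoset.seqL u v).carrier _ (Sum.inl x) (Sum.inl y) ↔ x ≤ y :=
  Sum.Lex.inl_le_inl_iff
theorem seq_rr (x y : v.carrier) :
    @LE.le (LPoset.seqL u v).carrier _ (Sum.inr x) (Sum.inr y) ↔ x ≤ y :=
  Sum.Lex.inr_le_inr_iff
theorem seq_lr (x : u.carrier) (y : v.carrier) :
    @LE.le (LPoset.seqL u v).carrier _ (Sum.inl x) (Sum.inr y) ↔ True :=
  iff_of_true (Sum.Lex.inl_le_inr _ _) trivial
theorem seq_rl (x : v.carrier) (y : u.carrier) :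
    @LE.le (LPoset.seqL u v).carrier _ (Sum.inr x) (Sum.inl y) ↔ False :=
  iff_of_false Sum.Lex.not_inr_le_inl id
theorem par_ll (x y : u.carrier) :
    @LE.le (LPoset.parL u v).carrier _ (Sum.inl x) (Sum.inl y) ↔ x ≤ y :=
  Sum.inl_le_inl_iff
theorem par_rr (x y : v.carrier) :
    @LE.le (LPoset.parL u v).carrier _ (Sum.inr x) (Sum.inr y) ↔ x ≤ y :=
  Sum.inr_le_inr_iff
theorem par_lr (x : u.carrier) (y : v.carrier) :
    @LE.le (LPoset.parL u v).carrier _ (Sum.inl x) (Sum.inr y) ↔ False :=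
  iff_of_false Sum.not_inl_le_inr id
theorem par_rl (x : v.carrier) (y : u.carrier) :
    @LE.le (LPoset.parL u v).carrier _ (Sum.inr x) (Sum.inl y) ↔ False :=
  iff_of_false Sum.not_inr_le_inl id

end le

theorem ins_ll {A : Type} (c : LPoset (Option A)) (u : LPoset A) (x y) :
    @LE.le (LPoset.insL c u).carrier _ (Sum.inl x) (Sum.inl y) ↔ x.val ≤ y.val := Iff.rfl
theorem ins_rr {A : Type} (c : LPoset (Option A)) (u : LPoset A) (x y) :
    @LE.le (LPoset.insL c u).carrier _ (Sum.inr x) (Sum.inr y) ↔ x ≤ y := Iff.rfl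
theorem ins_lr {A : Type} (c : LPoset (Option A)) (u : LPoset A) (s) (hs : c.lab s = none)
    (hc : c.uniqueStarL) (x y) :
    @LE.le (LPoset.insL c u).carrier _ (Sum.inl x) (Sum.inr y) ↔ x.val ≤ s := by
  constructor
  · rintro ⟨_, t, ht, h⟩
    rwa [hc.unique hs ht]
  · intro h
    exact ⟨hc, s, hs, h⟩
theorem ins_rl {A : Type} (c : LPoset (Option A)) (u : LPoset A) (s) (hs : c.lab s = none)
    (hc : c.uniqueStarL) (x y) :
    @LE.le (LPoset.insL c u).carrier _ (Sum.inr x) (Sum.inl y) ↔ s ≤ y.val := by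
  constructor
  · rintro ⟨_, t, ht, h⟩
    rwa [hc.unique hs ht]
  · intro h
    exact ⟨hc, s, hs, h⟩

namespace Pomset
variable {A : Type}

theorem seq_assoc (U V W : Pomset A) : seq U (seq V W) = seq (seq U V) W := by
  induction U using Quotient.inductionOn
  induction V using Quotient.inductionOn
  induction W using Quotient.inductionOn
  rename_i u v w
  refine Quotient.sound (mkIso (u := LPoset.seqL u (LPoset.seqL v w))
    (v := LPoset.seqL (LPoset.seqL u v) w)
    (fun x => match x with
      | Sum.inl a => Sum.inl (Sum.inl a)
      | Sum.inr (Sum.inl a) => Sum.inl (Sum.inr a)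
      | Sum.inr (Sum.inr a) => Sum.inr a) ?_ ?_ ?_)
  · rintro ((a | a) | a)
    · exact ⟨Sum.inl a, rfl⟩
    · exact ⟨Sum.inr (Sum.inl a), rfl⟩
    · exact ⟨Sum.inr (Sum.inr a), rfl⟩
  · rintro (a | a | a) (b | b | b) <;>
    (
      repeat first
        | refine (seq_ll _ _ _ _).trans ?_
        | refine (seq_rr _ _ _ _).trans ?_
        | refine (seq_lr _ _ _ _).trans ?_
        | refine (seq_rl _ _ _ _).trans ?_
      refine Iff.symm ?_
      repeat first
        | refine (seq_ll _ _ _ _).trans ?_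
        | refine (seq_rr _ _ _ _).trans ?_
        | refine (seq_lr _ _ _ _).trans ?_
        | refine (seq_rl _ _ _ _).trans ?_
      exact Iff.rfl)
  · rintro (a | a | a) <;> rfl

theorem par_assoc (U V W : Pomset A) : par U (par V W) = par (par U V) W := by
  induction U using Quotient.inductionOn
  induction V using Quotient.inductionOn
  induction W using Quotient.inductionOn
  rename_i u v w
  refine Quotient.sound (mkIso (u := LPoset.parL u (LPoset.parL v w))
    (v := LPoset.parL (LPoset.parL u v) w)
    (fun x => match x with
      | Sum.inl a => Sum.inl (Sum.inl a)
      | Sum.inr (Sum.inl a) => Sum.inl (Sum.inr a)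
      | Sum.inr (Sum.inr a) => Sum.inr a) ?_ ?_ ?_)
  · rintro ((a | a) | a)
    · exact ⟨Sum.inl a, rfl⟩
    · exact ⟨Sum.inr (Sum.inl a), rfl⟩
    · exact ⟨Sum.inr (Sum.inr a), rfl⟩
  · rintro (a | a | a) (b | b | b) <;>
    (
      repeat first
        | refine (par_ll _ _ _ _).trans ?_
        | refine (par_rr _ _ _ _).trans ?_
        | refine (par_lr _ _ _ _).trans ?_
        | refine (par_rl _ _ _ _).trans ?_
      refine Iff.symm ?_
      repeat first
        | refine (par_ll _ _ _ _).trans ?_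
        | refine (par_rr _ _ _ _).trans ?_
        | refine (par_lr _ _ _ _).trans ?_
        | refine (par_rl _ _ _ _).trans ?_
      exact Iff.rfl)
  · rintro (a | a | a) <;> rfl

theorem par_comm (U V : Pomset A) : par U V = par V U := by
  induction U using Quotient.inductionOn
  induction V using Quotient.inductionOn
  rename_i u v
  refine Quotient.sound (mkIso (u := LPoset.parL u v) (v := LPoset.parL v u)
    (fun x => match x with
      | Sum.inl a => Sum.inr a
      | Sum.inr a => Sum.inl a) ?_ ?_ ?_)
  · rintro (a | a)
    · exact ⟨Sum.inr a, rfl⟩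
    · exact ⟨Sum.inl a, rfl⟩
  · rintro (a | a) (b | b) <;> simp [par_ll, par_rr, par_lr, par_rl]
  · rintro (a | a) <;> rfl

theorem seq_empty (U : Pomset A) : seq U (empty A) = U := by
  induction U using Quotient.inductionOn
  rename_i u
  refine (Quotient.sound (mkIso (u := u) (v := LPoset.seqL u (LPoset.emptyL A))
    (fun x => Sum.inl x) ?_ ?_ ?_)).symm
  · rintro (a | a)
    · exact ⟨a, rfl⟩
    · exact Fin.elim0 a
  · intro a b; simp [seq_ll]
  · intro a; rfl

theorem empty_seq (U : Pomset A) : seq (empty A) U = U := by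
  induction U using Quotient.inductionOn
  rename_i u
  refine (Quotient.sound (mkIso (u := u) (v := LPoset.seqL (LPoset.emptyL A) u)
    (fun x => Sum.inr x) ?_ ?_ ?_)).symm
  · rintro (a | a)
    · exact Fin.elim0 a
    · exact ⟨a, rfl⟩
  · intro a b; simp [seq_rr]
  · intro a; rfl

theorem par_empty (U : Pomset A) : par U (empty A) = U := by
  induction U using Quotient.inductionOn
  rename_i u
  refine (Quotient.sound (mkIso (u := u) (v := LPoset.parL u (LPoset.emptyL A))
    (fun x => Sum.inl x) ?_ ?_ ?_)).symm
  · rintro (a | a)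
    · exact ⟨a, rfl⟩
    · exact Fin.elim0 a
  · intro a b; simp [par_ll]
  · intro a; rfl

/-! ### Insertion -/

theorem isCtx_star : IsCtx (single (none : Option A)) :=
  ⟨PUnit.unit, rfl, fun _ _ => rfl⟩

theorem ins_star (U : Pomset A) : ins (single (none : Option A)) U = U := by
  induction U using Quotient.inductionOn
  rename_i u
  refine (Quotient.sound (mkIso (u := u) (v := LPoset.insL (LPoset.singleL none) u)
    (fun x => Sum.inr x) ?_ ?_ ?_)).symm
  · rintro (a | a)
    · exact absurd rfl a.2
    · exact ⟨a, rfl⟩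
  · intro a b; simp [ins_rr]
  · intro a; rfl

theorem isCtx_seq_left {U : Pomset A} {C : Pomset (Option A)} (hC : C.IsCtx) :
    IsCtx (seq (map some U) C) := by
  induction U using Quotient.inductionOn
  induction C using Quotient.inductionOn
  rename_i u c
  obtain ⟨s, hs, h⟩ := hC
  refine ⟨(Sum.inr s : (LPoset.seqL (LPoset.mapL some u) c).carrier), hs, ?_⟩
  rintro (a | a) ha
  · exact absurd ha (Option.some_ne_none _)
  · exact congrArg Sum.inr (h a ha)

theorem isCtx_seq_right {U : Pomset A} {C : Pomset (Option A)} (hC : C.IsCtx) :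
    IsCtx (seq C (map some U)) := by
  induction U using Quotient.inductionOn
  induction C using Quotient.inductionOn
  rename_i u c
  obtain ⟨s, hs, h⟩ := hC
  refine ⟨(Sum.inl s : (LPoset.seqL c (LPoset.mapL some u)).carrier), hs, ?_⟩
  rintro (a | a) ha
  · exact congrArg Sum.inl (h a ha)
  · exact absurd ha (Option.some_ne_none _)

theorem isCtx_par_left {U : Pomset A} {C : Pomset (Option A)} (hC : C.IsCtx) :
    IsCtx (par (map some U) C) := by
  induction U using Quotient.inductionOn
  induction C using Quotient.inductionOn
  rename_i u c
  obtain ⟨s, hs, h⟩ := hC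
  refine ⟨(Sum.inr s : (LPoset.parL (LPoset.mapL some u) c).carrier), hs, ?_⟩
  rintro (a | a) ha
  · exact absurd ha (Option.some_ne_none _)
  · exact congrArg Sum.inr (h a ha)

theorem ins_seq_left {U : Pomset A} {C : Pomset (Option A)} (hC : C.IsCtx) (V : Pomset A) :
    ins (seq (map some U) C) V = seq U (ins C V) := by
  have hC' := isCtx_seq_left (U := U) hC
  induction U using Quotient.inductionOn
  induction C using Quotient.inductionOn
  induction V using Quotient.inductionOn
  rename_i u c v
  obtain ⟨s, hs, -⟩ := id hC
  have hs' : (LPoset.seqL (LPoset.mapL some u) c).lab (Sum.inr s) = none := hs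
  refine (Quotient.sound (mkIso (u := LPoset.seqL u (LPoset.insL c v))
    (v := LPoset.insL (LPoset.seqL (LPoset.mapL some u) c) v)
    (fun x => match x with
      | Sum.inl a => Sum.inl ⟨Sum.inl a, Option.some_ne_none _⟩
      | Sum.inr (Sum.inl a) => Sum.inl ⟨Sum.inr a.1, a.2⟩
      | Sum.inr (Sum.inr a) => Sum.inr a) ?_ ?_ ?_)).symm
  · rintro (⟨a | a, ha⟩ | a)
    · exact ⟨Sum.inl a, rfl⟩
    · exact ⟨Sum.inr (Sum.inl ⟨a, ha⟩), rfl⟩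
    · exact ⟨Sum.inr (Sum.inr a), rfl⟩
  · rintro (a | a | a) (b | b | b) <;>
      (
        repeat first
          | refine (seq_ll _ _ _ _).trans ?_
          | refine (seq_rr _ _ _ _).trans ?_
          | refine (seq_lr _ _ _ _).trans ?_
          | refine (seq_rl _ _ _ _).trans ?_
          | refine (ins_ll _ _ _ _).trans ?_
          | refine (ins_rr _ _ _ _).trans ?_
          | refine (ins_lr _ _ _ hs' hC' _ _).trans ?_
          | refine (ins_rl _ _ _ hs' hC' _ _).trans ?_
          | refine (ins_lr _ _ _ hs hC _ _).trans ?_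
          | refine (ins_rl _ _ _ hs hC _ _).trans ?_
        refine Iff.symm ?_
        repeat first
          | refine (seq_ll _ _ _ _).trans ?_
          | refine (seq_rr _ _ _ _).trans ?_
          | refine (seq_lr _ _ _ _).trans ?_
          | refine (seq_rl _ _ _ _).trans ?_
          | refine (ins_ll _ _ _ _).trans ?_
          | refine (ins_rr _ _ _ _).trans ?_
          | refine (ins_lr _ _ _ hs' hC' _ _).trans ?_
          | refine (ins_rl _ _ _ hs' hC' _ _).trans ?_
          | refine (ins_lr _ _ _ hs hC _ _).trans ?_
          | refine (ins_rl _ _ _ hs hC _ _).trans ?_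
        exact Iff.rfl)
  · rintro (a | a | a) <;> rfl

theorem ins_seq_right {U : Pomset A} {C : Pomset (Option A)} (hC : C.IsCtx) (V : Pomset A) :
    ins (seq C (map some U)) V = seq (ins C V) U := by
  have hC' := isCtx_seq_right (U := U) hC
  induction U using Quotient.inductionOn
  induction C using Quotient.inductionOn
  induction V using Quotient.inductionOn
  rename_i u c v
  obtain ⟨s, hs, -⟩ := id hC
  have hs' : (LPoset.seqL c (LPoset.mapL some u)).lab (Sum.inl s) = none := hs
  refine (Quotient.sound (mkIso (u := LPoset.seqL (LPoset.insL c v) u)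
    (v := LPoset.insL (LPoset.seqL c (LPoset.mapL some u)) v)
    (fun x => match x with
      | Sum.inr a => Sum.inl ⟨Sum.inr a, Option.some_ne_none _⟩
      | Sum.inl (Sum.inl a) => Sum.inl ⟨Sum.inl a.1, a.2⟩
      | Sum.inl (Sum.inr a) => Sum.inr a) ?_ ?_ ?_)).symm
  · rintro (⟨a | a, ha⟩ | a)
    · exact ⟨Sum.inl (Sum.inl ⟨a, ha⟩), rfl⟩
    · exact ⟨Sum.inr a, rfl⟩
    · exact ⟨Sum.inl (Sum.inr a), rfl⟩
  · rintro ((a | a) | a) ((b | b) | b) <;>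
      (
        repeat first
          | refine (seq_ll _ _ _ _).trans ?_
          | refine (seq_rr _ _ _ _).trans ?_
          | refine (seq_lr _ _ _ _).trans ?_
          | refine (seq_rl _ _ _ _).trans ?_
          | refine (ins_ll _ _ _ _).trans ?_
          | refine (ins_rr _ _ _ _).trans ?_
          | refine (ins_lr _ _ _ hs' hC' _ _).trans ?_
          | refine (ins_rl _ _ _ hs' hC' _ _).trans ?_
          | refine (ins_lr _ _ _ hs hC _ _).trans ?_
          | refine (ins_rl _ _ _ hs hC _ _).trans ?_
        refine Iff.symm ?_
        repeat first
          | refine (seq_ll _ _ _ _).trans ?_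
          | refine (seq_rr _ _ _ _).trans ?_
          | refine (seq_lr _ _ _ _).trans ?_
          | refine (seq_rl _ _ _ _).trans ?_
          | refine (ins_ll _ _ _ _).trans ?_
          | refine (ins_rr _ _ _ _).trans ?_
          | refine (ins_lr _ _ _ hs' hC' _ _).trans ?_
          | refine (ins_rl _ _ _ hs' hC' _ _).trans ?_
          | refine (ins_lr _ _ _ hs hC _ _).trans ?_
          | refine (ins_rl _ _ _ hs hC _ _).trans ?_
        exact Iff.rfl)
  · rintro ((a | a) | a) <;> rfl

theorem ins_par_left {U : Pomset A} {C : Pomset (Option A)} (hC : C.IsCtx) (V : Pomset A) :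
    ins (par (map some U) C) V = par U (ins C V) := by
  have hC' := isCtx_par_left (U := U) hC
  induction U using Quotient.inductionOn
  induction C using Quotient.inductionOn
  induction V using Quotient.inductionOn
  rename_i u c v
  obtain ⟨s, hs, -⟩ := id hC
  have hs' : (LPoset.parL (LPoset.mapL some u) c).lab (Sum.inr s) = none := hs
  refine (Quotient.sound (mkIso (u := LPoset.parL u (LPoset.insL c v))
    (v := LPoset.insL (LPoset.parL (LPoset.mapL some u) c) v)
    (fun x => match x with
      | Sum.inl a => Sum.inl ⟨Sum.inl a, Option.some_ne_none _⟩
      | Sum.inr (Sum.inl a) => Sum.inl ⟨Sum.inr a.1, a.2⟩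
      | Sum.inr (Sum.inr a) => Sum.inr a) ?_ ?_ ?_)).symm
  · rintro (⟨a | a, ha⟩ | a)
    · exact ⟨Sum.inl a, rfl⟩
    · exact ⟨Sum.inr (Sum.inl ⟨a, ha⟩), rfl⟩
    · exact ⟨Sum.inr (Sum.inr a), rfl⟩
  · rintro (a | a | a) (b | b | b) <;>
      (
        repeat first
          | refine (par_ll _ _ _ _).trans ?_
          | refine (par_rr _ _ _ _).trans ?_
          | refine (par_lr _ _ _ _).trans ?_
          | refine (par_rl _ _ _ _).trans ?_
          | refine (ins_ll _ _ _ _).trans ?_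
          | refine (ins_rr _ _ _ _).trans ?_
          | refine (ins_lr _ _ _ hs' hC' _ _).trans ?_
          | refine (ins_rl _ _ _ hs' hC' _ _).trans ?_
          | refine (ins_lr _ _ _ hs hC _ _).trans ?_
          | refine (ins_rl _ _ _ hs hC _ _).trans ?_
        refine Iff.symm ?_
        repeat first
          | refine (par_ll _ _ _ _).trans ?_
          | refine (par_rr _ _ _ _).trans ?_
          | refine (par_lr _ _ _ _).trans ?_
          | refine (par_rl _ _ _ _).trans ?_
          | refine (ins_ll _ _ _ _).trans ?_
          | refine (ins_rr _ _ _ _).trans ?_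
          | refine (ins_lr _ _ _ hs' hC' _ _).trans ?_
          | refine (ins_rl _ _ _ hs' hC' _ _).trans ?_
          | refine (ins_lr _ _ _ hs hC _ _).trans ?_
          | refine (ins_rl _ _ _ hs hC _ _).trans ?_
        exact Iff.rfl)
  · rintro (a | a | a) <;> rfl

theorem map_seq {B : Type} (f : A → B) (U V : Pomset A) :
    map f (seq U V) = seq (map f U) (map f V) := by
  induction U using Quotient.inductionOn
  induction V using Quotient.inductionOn
  rename_i u v
  refine Quotient.sound (mkIso (u := LPoset.mapL f (LPoset.seqL u v))
    (v := LPoset.seqL (LPoset.mapL f u) (LPoset.mapL f v)) (fun x => x) ?_ ?_ ?_)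
  · exact fun x => ⟨x, rfl⟩
  · exact fun x y => Iff.rfl
  · rintro (a | a) <;> rfl

theorem map_par {B : Type} (f : A → B) (U V : Pomset A) :
    map f (par U V) = par (map f U) (map f V) := by
  induction U using Quotient.inductionOn
  induction V using Quotient.inductionOn
  rename_i u v
  refine Quotient.sound (mkIso (u := LPoset.mapL f (LPoset.parL u v))
    (v := LPoset.parL (LPoset.mapL f u) (LPoset.mapL f v)) (fun x => x) ?_ ?_ ?_)
  · exact fun x => ⟨x, rfl⟩
  · exact fun x y => Iff.rfl
  · rintro (a | a) <;> rfl

theorem map_empty {B : Type} (f : A → B) : map f (empty A) = empty B := by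
  refine Quotient.sound (mkIso (u := LPoset.mapL f (LPoset.emptyL A))
    (v := LPoset.emptyL B) (fun x => x) ?_ ?_ ?_)
  · exact fun x => ⟨x, rfl⟩
  · exact fun x y => Iff.rfl
  · exact fun x => Fin.elim0 x

theorem IsSP.map {B : Type} (f : A → B) {U : Pomset A} (h : U.IsSP) : (map f U).IsSP := by
  induction h with
  | empty => rw [map_empty]; exact .empty
  | single a => exact .single (f a)
  | seq _ _ h1 h2 => rw [map_seq]; exact .seq h1 h2
  | par _ _ h1 h2 => rw [map_par]; exact .par h1 h2

/-- No star. -/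
abbrev NoStar (C : Pomset (Option A)) : Prop := C.Over {x | x ≠ none}

theorem over_seq {Γ : Set A} {U V : Pomset A} (h : (seq U V).Over Γ) :
    U.Over Γ ∧ V.Over Γ := by
  induction U using Quotient.inductionOn
  induction V using Quotient.inductionOn
  exact ⟨fun x => h (Sum.inl x), fun x => h (Sum.inr x)⟩

theorem over_par {Γ : Set A} {U V : Pomset A} (h : (par U V).Over Γ) :
    U.Over Γ ∧ V.Over Γ := by
  induction U using Quotient.inductionOn
  induction V using Quotient.inductionOn
  exact ⟨fun x => h (Sum.inl x), fun x => h (Sum.inr x)⟩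

theorem isCtx_seq {U V : Pomset (Option A)} (h : (seq U V).IsCtx) :
    (U.IsCtx ∧ V.NoStar) ∨ (U.NoStar ∧ V.IsCtx) := by
  induction U using Quotient.inductionOn
  induction V using Quotient.inductionOn
  obtain ⟨s | s, hs, h⟩ := h
  · refine Or.inl ⟨⟨s, hs, fun y hy => Sum.inl_injective (h (Sum.inl y) hy)⟩, fun y hy => ?_⟩
    cases h (Sum.inr y) hy
  · refine Or.inr ⟨fun y hy => ?_, ⟨s, hs, fun y hy => Sum.inr_injective (h (Sum.inr y) hy)⟩⟩
    cases h (Sum.inl y) hy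

theorem isCtx_par {U V : Pomset (Option A)} (h : (par U V).IsCtx) :
    (U.IsCtx ∧ V.NoStar) ∨ (U.NoStar ∧ V.IsCtx) := by
  induction U using Quotient.inductionOn
  induction V using Quotient.inductionOn
  obtain ⟨s | s, hs, h⟩ := h
  · refine Or.inl ⟨⟨s, hs, fun y hy => Sum.inl_injective (h (Sum.inl y) hy)⟩, fun y hy => ?_⟩
    cases h (Sum.inr y) hy
  · refine Or.inr ⟨fun y hy => ?_, ⟨s, hs, fun y hy => Sum.inr_injective (h (Sum.inr y) hy)⟩⟩
    cases h (Sum.inl y) hy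

end Pomset

open Pomset

/-! ### Context functions -/

/-- Functions on pomsets given by series-parallel contexts. -/
inductive CtxFun {A : Type} : (Pomset A → Pomset A) → Prop
  | id : CtxFun (fun X => X)
  | seqL {U F} : U.IsSP → CtxFun F → CtxFun (fun X => Pomset.seq U (F X))
  | seqR {U F} : U.IsSP → CtxFun F → CtxFun (fun X => Pomset.seq (F X) U)
  | par {U F} : U.IsSP → CtxFun F → CtxFun (fun X => Pomset.par U (F X))

theorem CtxFun.comp {A : Type} {F G : Pomset A → Pomset A} (hF : CtxFun F) (hG : CtxFun G) :
    CtxFun (fun X => F (G X)) := by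
  induction hF with
  | id => exact hG
  | seqL hU _ ih => exact .seqL hU ih
  | seqR hU _ ih => exact .seqR hU ih
  | par hU _ ih => exact .par hU ih

theorem CtxFun.exists_ctx {A : Type} {F : Pomset A → Pomset A} (hF : CtxFun F) :
    ∃ C : Pomset (Option A), C.IsSPCtx ∧ C.ins = F := by
  induction hF with
  | id => exact ⟨single none, ⟨isCtx_star, .single _⟩, funext ins_star⟩
  | seqL hU _ ih =>
    obtain ⟨C, hC, rfl⟩ := ih
    exact ⟨_, ⟨isCtx_seq_left hC.1, .seq (hU.map some) hC.2⟩, funext (ins_seq_left hC.1)⟩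
  | seqR hU _ ih =>
    obtain ⟨C, hC, rfl⟩ := ih
    exact ⟨_, ⟨isCtx_seq_right hC.1, .seq hC.2 (hU.map some)⟩, funext (ins_seq_right hC.1)⟩
  | par hU _ ih =>
    obtain ⟨C, hC, rfl⟩ := ih
    exact ⟨_, ⟨isCtx_par_left hC.1, .par (hU.map some) hC.2⟩, funext (ins_par_left hC.1)⟩

theorem sp_aux {A : Type} {C : Pomset (Option A)} (h : C.IsSP) :
    (C.NoStar → ∃ U : Pomset A, U.IsSP ∧ C = Pomset.map some U) ∧
      (C.IsCtx → CtxFun C.ins) := by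
  induction h with
  | empty =>
    refine ⟨fun _ => ⟨_, .empty, (map_empty some).symm⟩, ?_⟩
    rintro ⟨s, _⟩
    exact Fin.elim0 s
  | single a =>
    cases a with
    | none =>
      refine ⟨fun h => absurd rfl (h PUnit.unit), fun _ => ?_⟩
      have : Pomset.ins (Pomset.single (none : Option A)) = fun X => X := funext ins_star
      rw [this]; exact .id
    | some a =>
      refine ⟨fun h => ⟨_, .single a, rfl⟩, ?_⟩
      rintro ⟨s, hs, _⟩
      exact absurd hs (Option.some_ne_none _)
  | @seq C D _ _ h1 h2 =>
    refine ⟨fun h => ?_, fun h => ?_⟩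
    · obtain ⟨U, hU, rfl⟩ := h1.1 (over_seq h).1
      obtain ⟨V, hV, rfl⟩ := h2.1 (over_seq h).2
      exact ⟨_, .seq hU hV, (map_seq _ _ _).symm⟩
    · rcases isCtx_seq h with ⟨hc, hd⟩ | ⟨hc, hd⟩
      · obtain ⟨V, hV, rfl⟩ := h2.1 hd
        rw [show Pomset.ins (Pomset.seq C (Pomset.map some V)) = _ from
          funext (ins_seq_right hc)]
        exact .seqR hV (h1.2 hc)
      · obtain ⟨V, hV, rfl⟩ := h1.1 hc
        rw [show Pomset.ins (Pomset.seq (Pomset.map some V) D) = _ from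
          funext (ins_seq_left hd)]
        exact .seqL hV (h2.2 hd)
  | @par C D _ _ h1 h2 =>
    refine ⟨fun h => ?_, fun h => ?_⟩
    · obtain ⟨U, hU, rfl⟩ := h1.1 (over_par h).1
      obtain ⟨V, hV, rfl⟩ := h2.1 (over_par h).2
      exact ⟨_, .par hU hV, (map_par _ _ _).symm⟩
    · rcases isCtx_par h with ⟨hc, hd⟩ | ⟨hc, hd⟩
      · obtain ⟨V, hV, rfl⟩ := h2.1 hd
        rw [par_comm, show Pomset.ins (Pomset.par (Pomset.map some V) C) = _ from
          funext (ins_par_left hc)]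
        exact .par hV (h1.2 hc)
      · obtain ⟨V, hV, rfl⟩ := h1.1 hc
        rw [show Pomset.ins (Pomset.par (Pomset.map some V) D) = _ from
          funext (ins_par_left hd)]
        exact .par hV (h2.2 hd)

/-! ### Term languages -/

theorem pow_sp {A : Type} {L : Lang A} (h : ∀ U ∈ L, U.IsSP) (n : ℕ) :
    ∀ U ∈ L.pow n, U.IsSP := by
  induction n with
  | zero => rintro U rfl; exact .empty
  | succ n ih => rintro W ⟨U, hU, V, hV, rfl⟩; exact .seq (ih _ hU) (h _ hV)

theorem lang_sp {A : Type} (e : Term A) : ∀ U ∈ e.lang, U.IsSP := by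
  induction e with
  | zero => rintro U ⟨⟩
  | one => rintro U rfl; exact .empty
  | var a => rintro U rfl; exact .single a
  | add e f h1 h2 => rintro U (h | h); exacts [h1 _ h, h2 _ h]
  | seq e f h1 h2 => rintro W ⟨U, hU, V, hV, rfl⟩; exact .seq (h1 _ hU) (h2 _ hV)
  | par e f h1 h2 => rintro W ⟨U, hU, V, hV, rfl⟩; exact .par (h1 _ hU) (h2 _ hV)
  | star e h =>
    intro U hU
    obtain ⟨n, hn⟩ := Set.mem_iUnion.1 hU
    exact pow_sp h n U hn

theorem lang_seq_assoc {A : Type} (L K M : Lang A) :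
    L.seq (K.seq M) = (L.seq K).seq M := by
  ext W
  constructor
  · rintro ⟨U, hU, _, ⟨V, hV, X, hX, rfl⟩, rfl⟩
    exact ⟨_, ⟨U, hU, V, hV, rfl⟩, X, hX, Pomset.seq_assoc _ _ _⟩
  · rintro ⟨_, ⟨U, hU, V, hV, rfl⟩, X, hX, rfl⟩
    exact ⟨U, hU, _, ⟨V, hV, X, hX, rfl⟩, (Pomset.seq_assoc _ _ _).symm⟩

theorem lang_par_assoc {A : Type} (L K M : Lang A) :
    L.par (K.par M) = (L.par K).par M := by
  ext W
  constructor
  · rintro ⟨U, hU, _, ⟨V, hV, X, hX, rfl⟩, rfl⟩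
    exact ⟨_, ⟨U, hU, V, hV, rfl⟩, X, hX, Pomset.par_assoc _ _ _⟩
  · rintro ⟨_, ⟨U, hU, V, hV, rfl⟩, X, hX, rfl⟩
    exact ⟨U, hU, _, ⟨V, hV, X, hX, rfl⟩, (Pomset.par_assoc _ _ _).symm⟩

theorem lang_seq_one {A : Type} (L : Lang A) : L.seq {Pomset.empty A} = L := by
  ext W
  constructor
  · rintro ⟨U, hU, _, rfl, rfl⟩
    rwa [Pomset.seq_empty]
  · intro h
    exact ⟨W, h, _, rfl, (Pomset.seq_empty W).symm⟩

theorem lang_one_seq {A : Type} (L : Lang A) : Lang.seq {Pomset.empty A} L = L := by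
  ext W
  constructor
  · rintro ⟨_, rfl, U, hU, rfl⟩
    rwa [Pomset.empty_seq]
  · intro h
    exact ⟨_, rfl, W, h, (Pomset.empty_seq W).symm⟩

theorem lang_par_comm {A : Type} (L K : Lang A) : L.par K = K.par L := by
  ext W
  constructor <;>
  · rintro ⟨U, hU, V, hV, rfl⟩
    exact ⟨V, hV, U, hU, Pomset.par_comm _ _⟩

theorem lang_par_one {A : Type} (L : Lang A) : L.par {Pomset.empty A} = L := by
  ext W
  constructor
  · rintro ⟨U, hU, _, rfl, rfl⟩
    rwa [Pomset.par_empty]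
  · intro h
    exact ⟨W, h, _, rfl, (Pomset.par_empty W).symm⟩

theorem lang_pow_succ' {A : Type} (L : Lang A) (n : ℕ) : L.pow (n + 1) = L.seq (L.pow n) := by
  induction n with
  | zero => exact (lang_one_seq L).trans (lang_seq_one L).symm
  | succ n ih =>
    rw [show L.pow (n + 1 + 1) = (L.pow (n + 1)).seq L from rfl]
    conv_lhs => rw [ih]
    rw [← lang_seq_assoc]; rfl

theorem lang_unfoldR {A : Type} (L : Lang A) :
    {Pomset.empty A} ∪ L.star.seq L = L.star := by
  ext W
  constructor
  · rintro (rfl | ⟨U, hU, V, hV, rfl⟩)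
    · exact Set.mem_iUnion.2 ⟨0, rfl⟩
    · obtain ⟨n, hn⟩ := Set.mem_iUnion.1 hU
      exact Set.mem_iUnion.2 ⟨n + 1, U, hn, V, hV, rfl⟩
  · intro h
    obtain ⟨n, hn⟩ := Set.mem_iUnion.1 h
    cases n with
    | zero => exact Or.inl hn
    | succ n =>
      obtain ⟨U, hU, V, hV, rfl⟩ := hn
      exact Or.inr ⟨U, Set.mem_iUnion.2 ⟨n, hU⟩, V, hV, rfl⟩

theorem lang_unfoldL {A : Type} (L : Lang A) :
    {Pomset.empty A} ∪ L.seq L.star = L.star := by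
  ext W
  constructor
  · rintro (rfl | ⟨U, hU, V, hV, rfl⟩)
    · exact Set.mem_iUnion.2 ⟨0, rfl⟩
    · obtain ⟨n, hn⟩ := Set.mem_iUnion.1 hV
      refine Set.mem_iUnion.2 ⟨n + 1, ?_⟩
      rw [lang_pow_succ']
      exact ⟨U, hU, V, hn, rfl⟩
  · intro h
    obtain ⟨n, hn⟩ := Set.mem_iUnion.1 h
    cases n with
    | zero => exact Or.inl hn
    | succ n =>
      rw [lang_pow_succ'] at hn
      obtain ⟨U, hU, V, hV, rfl⟩ := hn
      exact Or.inr ⟨U, hU, V, Set.mem_iUnion.2 ⟨n, hV⟩, rfl⟩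

/-! ### Soundness -/

/-- `K` is closed under the hypotheses in `H`. -/
def HClosed {A : Type} (H : HypSet A) (K : Lang A) : Prop :=
  ∀ e f : Term A, (e, f) ∈ H → ∀ F, CtxFun F →
    (∀ V ∈ f.lang, F V ∈ K) → ∀ V ∈ e.lang, F V ∈ K

/-- Contextual comparison of languages relative to a closed language `K`. -/
def CLe {A : Type} (K L M : Lang A) : Prop :=
  ∀ F, CtxFun F → (∀ V ∈ M, F V ∈ K) → ∀ V ∈ L, F V ∈ K

section CLe
variable {A : Type} {K L L' M M' N : Lang A}

theorem CLe.of_subset (h : L ⊆ M) : CLe K L M := fun _ _ hM V hV => hM V (h hV)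

theorem CLe.trans (h : CLe K L M) (h' : CLe K M N) : CLe K L N :=
  fun F hF hN => h F hF (h' F hF hN)

theorem CLe.union (h : CLe K L M) (h' : CLe K L' M) : CLe K (L ∪ L') M := by
  rintro F hF hM V (hV | hV)
  exacts [h F hF hM V hV, h' F hF hM V hV]

theorem CLe.seq (hL : ∀ U ∈ L, U.IsSP) (hM' : ∀ U ∈ M', U.IsSP)
    (h : CLe K L M) (h' : CLe K L' M') : CLe K (L.seq L') (M.seq M') := by
  rintro F hF hN _ ⟨U, hU, V, hV, rfl⟩
  refine h' _ (hF.comp (.seqL (hL U hU) .id)) (fun V' hV' => ?_) V hV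
  exact h _ (hF.comp (.seqR (hM' V' hV') .id)) (fun U' hU' => hN _ ⟨U', hU', V', hV', rfl⟩) U hU

theorem CLe.par (hL : ∀ U ∈ L, U.IsSP) (hM' : ∀ U ∈ M', U.IsSP)
    (h : CLe K L M) (h' : CLe K L' M') : CLe K (L.par L') (M.par M') := by
  rintro F hF hN _ ⟨U, hU, V, hV, rfl⟩
  refine h' _ (hF.comp (.par (hL U hU) .id)) (fun V' hV' => ?_) V hV
  rw [par_comm]
  refine h _ (hF.comp (.par (hM' V' hV') .id)) (fun U' hU' => ?_) U hU
  rw [par_comm]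
  exact hN _ ⟨U', hU', V', hV', rfl⟩

theorem CLe.pow (hL : ∀ U ∈ L, U.IsSP) (hM : ∀ U ∈ M, U.IsSP) (h : CLe K L M) (n : ℕ) :
    CLe K (L.pow n) (M.pow n) := by
  induction n with
  | zero => exact .of_subset subset_rfl
  | succ n ih => exact .seq (pow_sp hL n) hM ih h

theorem CLe.star_of (h : ∀ n, CLe K (L.pow n) M) : CLe K L.star M := by
  intro F hF hM V hV
  obtain ⟨n, hn⟩ := Set.mem_iUnion.1 hV
  exact h n F hF hM V hn

theorem CLe.star (hL : ∀ U ∈ L, U.IsSP) (hM : ∀ U ∈ M, U.IsSP) (h : CLe K L M) :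
    CLe K L.star M.star :=
  .star_of fun n => (h.pow hL hM n).trans (.of_subset (Set.subset_iUnion _ n))

theorem CLe.refl : CLe K L L := .of_subset subset_rfl

theorem CLe.lfpL (hL : ∀ U ∈ L, U.IsSP) (hM : ∀ U ∈ M, U.IsSP)
    (h : CLe K (L.seq M) M) (n : ℕ) : CLe K ((L.pow n).seq M) M := by
  induction n with
  | zero => exact .of_subset (lang_one_seq M).subset
  | succ n ih =>
    rw [show L.pow (n + 1) = (L.pow n).seq L from rfl, ← lang_seq_assoc]
    exact (CLe.seq (pow_sp hL n) hM .refl h).trans ih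

theorem CLe.lfpR (hL : ∀ U ∈ L, U.IsSP) (hM : ∀ U ∈ M, U.IsSP)
    (h : CLe K (M.seq L) M) (n : ℕ) : CLe K (M.seq (L.pow n)) M := by
  induction n with
  | zero => exact .of_subset (lang_seq_one M).subset
  | succ n ih =>
    have hsp : ∀ U ∈ M.seq (L.pow n), U.IsSP := by
      rintro _ ⟨U, hU, V, hV, rfl⟩; exact .seq (hM U hU) (pow_sp hL n V hV)
    rw [show L.pow (n + 1) = (L.pow n).seq L from rfl, lang_seq_assoc]
    exact (CLe.seq hsp hL ih .refl).trans h

theorem CLe.seq_star_of (h : ∀ n, CLe K (N.seq (L.pow n)) M) : CLe K (N.seq L.star) M := by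
  rintro F hF hM _ ⟨U, hU, V, hV, rfl⟩
  obtain ⟨n, hn⟩ := Set.mem_iUnion.1 hV
  exact h n F hF hM _ ⟨U, hU, V, hn, rfl⟩

theorem CLe.star_seq_of (h : ∀ n, CLe K ((L.pow n).seq N) M) : CLe K (L.star.seq N) M := by
  rintro F hF hM _ ⟨U, hU, V, hV, rfl⟩
  obtain ⟨n, hn⟩ := Set.mem_iUnion.1 hU
  exact h n F hF hM _ ⟨U, hn, V, hV, rfl⟩

end CLe

theorem ceq_of_eq {A : Type} {K L M : Lang A} (h : L = M) : CLe K L M ∧ CLe K M L := by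
  subst h; exact ⟨.refl, .refl⟩

theorem soundness {A : Type} {H : HypSet A} {K : Lang A} (hK : HClosed H K) {e f : Term A}
    (h : CongH H e f) : CLe K e.lang f.lang ∧ CLe K f.lang e.lang := by
  induction h with
  | refl e => exact ⟨.refl, .refl⟩
  | symm _ ih => exact ih.symm
  | trans _ _ h1 h2 => exact ⟨h1.1.trans h2.1, h2.2.trans h1.2⟩
  | addCong _ _ h1 h2 =>
    exact ⟨.union (h1.1.trans (.of_subset Set.subset_union_left))
        (h2.1.trans (.of_subset Set.subset_union_right)),
      .union (h1.2.trans (.of_subset Set.subset_union_left))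
        (h2.2.trans (.of_subset Set.subset_union_right))⟩
  | seqCong _ _ h1 h2 =>
    exact ⟨.seq (lang_sp _) (lang_sp _) h1.1 h2.1, .seq (lang_sp _) (lang_sp _) h1.2 h2.2⟩
  | parCong _ _ h1 h2 =>
    exact ⟨.par (lang_sp _) (lang_sp _) h1.1 h2.1, .par (lang_sp _) (lang_sp _) h1.2 h2.2⟩
  | starCong _ h => exact ⟨.star (lang_sp _) (lang_sp _) h.1, .star (lang_sp _) (lang_sp _) h.2⟩
  | addZero e => exact ceq_of_eq (Set.union_empty _)
  | addIdem e => exact ceq_of_eq (Set.union_self _)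
  | addComm e f => exact ceq_of_eq (Set.union_comm _ _)
  | addAssoc e f g => exact ceq_of_eq (Set.union_assoc _ _ _).symm
  | seqAssoc e f g => exact ceq_of_eq (lang_seq_assoc _ _ _)
  | seqDistL e f g =>
    refine ceq_of_eq (Set.ext fun W => ⟨?_, ?_⟩)
    · rintro ⟨U, hU, V, hV | hV, rfl⟩
      exacts [Or.inl ⟨U, hU, V, hV, rfl⟩, Or.inr ⟨U, hU, V, hV, rfl⟩]
    · rintro (⟨U, hU, V, hV, rfl⟩ | ⟨U, hU, V, hV, rfl⟩)
      exacts [⟨U, hU, V, Or.inl hV, rfl⟩, ⟨U, hU, V, Or.inr hV, rfl⟩]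
  | seqDistR e f g =>
    refine ceq_of_eq (Set.ext fun W => ⟨?_, ?_⟩)
    · rintro ⟨U, hU | hU, V, hV, rfl⟩
      exacts [Or.inl ⟨U, hU, V, hV, rfl⟩, Or.inr ⟨U, hU, V, hV, rfl⟩]
    · rintro (⟨U, hU, V, hV, rfl⟩ | ⟨U, hU, V, hV, rfl⟩)
      exacts [⟨U, Or.inl hU, V, hV, rfl⟩, ⟨U, Or.inr hU, V, hV, rfl⟩]
  | seqOneR e => exact ceq_of_eq (lang_seq_one _)
  | seqOneL e => exact ceq_of_eq (lang_one_seq _)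
  | seqZeroR e =>
    refine ceq_of_eq (Set.ext fun W => ⟨?_, fun h => h.elim⟩)
    rintro ⟨U, hU, V, hV, rfl⟩; exact hV.elim
  | seqZeroL e =>
    refine ceq_of_eq (Set.ext fun W => ⟨?_, fun h => h.elim⟩)
    rintro ⟨U, hU, V, hV, rfl⟩; exact hU.elim
  | parComm e f => exact ceq_of_eq (lang_par_comm _ _)
  | parOne e => exact ceq_of_eq (lang_par_one _)
  | parZero e =>
    refine ceq_of_eq (Set.ext fun W => ⟨?_, fun h => h.elim⟩)
    rintro ⟨U, hU, V, hV, rfl⟩; exact hV.elim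
  | parAssoc e f g => exact ceq_of_eq (lang_par_assoc _ _ _)
  | parDist e f g =>
    refine ceq_of_eq (Set.ext fun W => ⟨?_, ?_⟩)
    · rintro ⟨U, hU, V, hV | hV, rfl⟩
      exacts [Or.inl ⟨U, hU, V, hV, rfl⟩, Or.inr ⟨U, hU, V, hV, rfl⟩]
    · rintro (⟨U, hU, V, hV, rfl⟩ | ⟨U, hU, V, hV, rfl⟩)
      exacts [⟨U, hU, V, Or.inl hV, rfl⟩, ⟨U, hU, V, Or.inr hV, rfl⟩]
  | starUnfoldL e => exact ceq_of_eq (lang_unfoldL _)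
  | starUnfoldR e => exact ceq_of_eq (lang_unfoldR _)
  | @lfpL e f g _ ih =>
    have he : CLe K e.lang g.lang :=
      CLe.trans (.of_subset fun _ h => Or.inl (Or.inl h)) ih.1
    have hfg : CLe K (f.lang.seq g.lang) g.lang :=
      CLe.trans (.of_subset fun _ h => Or.inl (Or.inr h)) ih.1
    refine ⟨.union (.star_seq_of fun n => ?_) .refl, .of_subset Set.subset_union_right⟩
    exact (CLe.seq (pow_sp (lang_sp f) n) (lang_sp g) .refl he).trans
      (.lfpL (lang_sp f) (lang_sp g) hfg n)
  | @lfpR e f g _ ih =>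
    have he : CLe K e.lang f.lang :=
      CLe.trans (.of_subset fun _ h => Or.inl (Or.inl h)) ih.1
    have hfg : CLe K (f.lang.seq g.lang) f.lang :=
      CLe.trans (.of_subset fun _ h => Or.inl (Or.inr h)) ih.1
    refine ⟨.union (.seq_star_of fun n => ?_) .refl, .of_subset Set.subset_union_right⟩
    exact (CLe.seq (lang_sp e) (pow_sp (lang_sp g) n) he .refl).trans
      (.lfpR (lang_sp g) (lang_sp f) hfg n)
  | @hyp e f hef =>
    exact ⟨.union (hK e f hef) .refl, .of_subset Set.subset_union_right⟩

theorem cl_closed {A : Type} (H : HypSet A) (L : Lang A) : HClosed H (cl H L) := by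
  intro e f hef F hF hf V hV
  obtain ⟨C, hC, rfl⟩ := hF.exists_ctx
  exact closure.step hef hC hf hV

theorem cl_subset_of_closed {A : Type} {H H' : HypSet A} (hi : Implies H H') {L K : Lang A}
    (hL : L ⊆ K) (hK : HClosed H K) : cl H' L ⊆ K := by
  intro U hU
  change closure H' L U at hU
  induction hU with
  | base h => exact hL h
  | step hef hC _ hU ih =>
    exact (soundness hK (hi _ hef)).1 _ ((sp_aux hC.2).2 hC.1) ih _ (Or.inl hU)

theorem implies_refl {A : Type} (H : HypSet A) : Implies H H := fun _ hp => .hyp hp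

theorem CongH.mono {A : Type} {H H' : HypSet A} (hi : Implies H H') {e f : Term A}
    (h : CongH H' e f) : CongH H e f := by
  induction h with
  | refl e => exact .refl e
  | symm _ ih => exact .symm ih
  | trans _ _ h1 h2 => exact .trans h1 h2
  | addCong _ _ h1 h2 => exact .addCong h1 h2
  | seqCong _ _ h1 h2 => exact .seqCong h1 h2
  | parCong _ _ h1 h2 => exact .parCong h1 h2
  | starCong _ h => exact .starCong h
  | lfpL _ h => exact .lfpL h
  | lfpR _ h => exact .lfpR h
  | hyp h => exact hi _ h
  | addZero => exact .addZero _
  | addIdem => exact .addIdem _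
  | addComm => exact .addComm _ _
  | addAssoc => exact .addAssoc _ _ _
  | seqAssoc => exact .seqAssoc _ _ _
  | seqDistL => exact .seqDistL _ _ _
  | seqDistR => exact .seqDistR _ _ _
  | seqOneR => exact .seqOneR _
  | seqOneL => exact .seqOneL _
  | seqZeroR => exact .seqZeroR _
  | seqZeroL => exact .seqZeroL _
  | parComm => exact .parComm _ _
  | parOne => exact .parOne _
  | parZero => exact .parZero _
  | parAssoc => exact .parAssoc _ _ _
  | parDist => exact .parDist _ _ _
  | starUnfoldL => exact .starUnfoldL _
  | starUnfoldR => exact .starUnfoldR _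

theorem cl_cl {A : Type} {H H' : HypSet A} (hi : Implies H H') (L : Lang A) :
    cl H (cl H' L) = cl H L := by
  apply Set.Subset.antisymm
  · exact cl_subset_of_closed (implies_refl H)
      (cl_subset_of_closed hi (fun _ h => closure.base h) (cl_closed H L)) (cl_closed H L)
  · exact cl_subset_of_closed (implies_refl H)
      (fun _ h => closure.base (closure.base h)) (cl_closed H _)

/-- **Factorisation composes strong reductions.** -/
theorem factorisation_strong_reduction (A : Type) (H H₀ H₁ H' : HypSet A)
    (r₀ r₁ : Term A → Term A) (hfac : Factorises H H₀ H₁)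
    (h₀ : IsStrongReduction H₀ H' r₀) (h₁ : IsStrongReduction H₁ H' r₁) :
    StronglyReduces H H' ∧ IsStrongReduction H H' (r₁ ∘ r₀) := by
  obtain ⟨hi₀, hi₁, hcl⟩ := hfac
  have strong : ∀ e : Term A, cl H e.lang = cl H' ((r₁ ∘ r₀) e).lang := by
    intro e
    rw [hcl e.lang (lang_sp e), h₀.strong, cl_cl h₁.implies, h₁.strong]
    rfl
  have key : IsStrongReduction H H' (r₁ ∘ r₀) :=
    { implies := fun p hp => CongH.mono hi₀ (h₀.implies p hp)
      equiv := fun e => .trans (CongH.mono hi₀ (h₀.equiv e)) (CongH.mono hi₁ (h₁.equiv (r₀ e)))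
      reflect := fun e f h => by rw [← strong, ← strong, h]
      strong := strong }
  exact ⟨⟨_, key⟩, key⟩

end CKAH
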